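/- arXiv:math/0611235 — 5 statements merged into one kernel-verified Lean document; each statement's English description precedes it below -/
import Mathlib

section
/- For every s ∈ [0,1] and every constant c > 0, letting p_t(r) = c · e^{−t/8} · t^{−3/2} · sinh(r) · ∫_r^∞ σ·e^{−σ²/(2t)}·(cosh(σ) − cosh(r))^{−1/2} dσ for t > 0 and r > 0, one has lim_{t→∞} ∫_0^∞ |p_t(r) − p_t(r+s)| dr = 0. -/
open MeasureTheory Filter Real

/-- The density of the radial part of hyperbolic Brownian motion at time `t`
(with a multiplicative constant `c`). -/
noncomputable def pdens (c t r : ℝ) : ℝ :=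
  c * Real.exp (-t / 8) * t ^ (-(3 : ℝ) / 2) * Real.sinh r *
    ∫ σ in Set.Ioi r,
      σ * Real.exp (-σ ^ 2 / (2 * t)) * (Real.cosh σ - Real.cosh r) ^ (-(1 : ℝ) / 2)

/-- Weight kernel. -/
noncomputable def kker (r u : ℝ) : ℝ :=
  Real.sinh r * Real.exp (-(r + u) / 2) * (Real.cosh (r + u) - Real.cosh r) ^ (-(1 : ℝ) / 2)

/-- The rescaled integrand. -/
noncomputable def gker (t r u : ℝ) : ℝ :=
  (r + u) / t * Real.exp (-((r + u - t / 2) / √t) ^ 2 / 2) * kker r u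

lemma setIntegral_Ioi_shift (f : ℝ → ℝ) (r : ℝ) :
    ∫ σ in Set.Ioi r, f σ = ∫ u in Set.Ioi (0 : ℝ), f (r + u) := by
  rw [← integral_indicator measurableSet_Ioi, ← integral_indicator measurableSet_Ioi,
    ← integral_add_left_eq_self _ r]
  congr 1
  ext u
  simp [Set.indicator]

lemma pdens_eq (c t r : ℝ) : pdens c t r =
    c * Real.exp (-t / 8) * t ^ (-(3 : ℝ) / 2) * Real.sinh r *
    ∫ u in Set.Ioi (0 : ℝ), (r + u) * Real.exp (-(r + u) ^ 2 / (2 * t)) *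
      (Real.cosh (r + u) - Real.cosh r) ^ (-(1 : ℝ) / 2) := by
  unfold pdens
  rw [setIntegral_Ioi_shift]

lemma pdens_measurable (c t : ℝ) : Measurable (fun r => pdens c t r) := by
  simp_rw [pdens_eq]
  refine Measurable.mul (by fun_prop) ?_
  apply StronglyMeasurable.measurable
  apply StronglyMeasurable.integral_prod_right (f := fun r u => (r + u) * Real.exp (-(r + u) ^ 2 / (2 * t)) *
      (Real.cosh (r + u) - Real.cosh r) ^ (-(1 : ℝ) / 2))
  apply Measurable.stronglyMeasurable
  unfold Function.uncurry
  fun_prop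

lemma sqrt_mul_pdens (c t r : ℝ) (ht : 0 < t) :
    √t * pdens c t r = c * ∫ u in Set.Ioi (0 : ℝ), gker t r u := by
  rw [pdens_eq, ← integral_const_mul, ← integral_const_mul, ← integral_const_mul]
  congr 1
  ext u
  have h1 : √t * t ^ (-(3 : ℝ) / 2) = 1 / t := by
    rw [Real.sqrt_eq_rpow, ← Real.rpow_add ht]
    norm_num
    rw [Real.rpow_neg_one]
  have h2 : Real.exp (-t / 8) * Real.exp (-(r + u) ^ 2 / (2 * t)) =
      Real.exp (-((r + u - t / 2) / √t) ^ 2 / 2) * Real.exp (-(r + u) / 2) := by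
    rw [← Real.exp_add, ← Real.exp_add]
    congr 1
    rw [div_pow, Real.sq_sqrt ht.le]
    field_simp
    ring
  unfold gker kker
  calc _ = c * (√t * t ^ (-(3 : ℝ) / 2)) * (Real.exp (-t / 8) * Real.exp (-(r + u) ^ 2 / (2 * t)))
        * (r + u) * (Real.sinh r * (Real.cosh (r + u) - Real.cosh r) ^ (-(1 : ℝ) / 2)) := by ring
    _ = _ := by rw [h1, h2]; ring

lemma kker_nonneg (r u : ℝ) (hr : 0 < r) (hu : 0 < u) : 0 ≤ kker r u := by
  unfold kker
  have h : Real.cosh r < Real.cosh (r + u) := by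
    rw [Real.cosh_lt_cosh, abs_of_pos hr, abs_of_pos (by linarith)]; linarith
  have := Real.sinh_pos_iff.2 hr
  have := Real.rpow_nonneg (sub_pos.2 h).le (-(1 : ℝ) / 2)
  positivity

lemma kker_le (r u : ℝ) (hr : 0 < r) (hu : 0 < u) :
    kker r u ≤ Real.exp (-u / 2) * u ^ (-(1 : ℝ) / 2) := by
  unfold kker
  have hs := Real.sinh_pos_iff.2 hr
  have h : Real.sinh r * u ≤ Real.cosh (r + u) - Real.cosh r := by
    rw [Real.cosh_add]
    have h1 := Real.one_le_cosh u
    have h2 := Real.self_le_sinh_iff.2 hu.le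
    have h3 := Real.cosh_pos r
    nlinarith
  have h1 : (Real.cosh (r + u) - Real.cosh r) ^ (-(1 : ℝ) / 2) ≤
      Real.sinh r ^ (-(1 : ℝ) / 2) * u ^ (-(1 : ℝ) / 2) := by
    rw [← Real.mul_rpow hs.le hu.le]
    exact Real.rpow_le_rpow_of_nonpos (by positivity) h (by norm_num)
  have h2 : Real.sinh r * Real.sinh r ^ (-(1 : ℝ) / 2) ≤ Real.exp (r / 2) := by
    have : Real.sinh r * Real.sinh r ^ (-(1 : ℝ) / 2) = Real.sinh r ^ ((1 : ℝ) / 2) := by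
      nth_rewrite 1 [← Real.rpow_one (Real.sinh r)]
      rw [← Real.rpow_add hs]; norm_num
    rw [this, show r / 2 = r * (1 / 2) by ring, Real.exp_mul]
    apply Real.rpow_le_rpow hs.le _ (by norm_num)
    rw [Real.sinh_eq]
    have := Real.exp_pos r
    have := Real.exp_pos (-r)
    linarith
  calc _ ≤ Real.sinh r * Real.exp (-(r + u) / 2) *
        (Real.sinh r ^ (-(1 : ℝ) / 2) * u ^ (-(1 : ℝ) / 2)) := by gcongr
    _ = (Real.sinh r * Real.sinh r ^ (-(1 : ℝ) / 2)) * Real.exp (-(r + u) / 2) *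
        u ^ (-(1 : ℝ) / 2) := by ring
    _ ≤ Real.exp (r / 2) * Real.exp (-(r + u) / 2) * u ^ (-(1 : ℝ) / 2) := by gcongr
    _ = _ := by rw [← Real.exp_add]; congr 2; ring

lemma gker_nonneg (t r u : ℝ) (ht : 1 ≤ t) (hr : 0 < r) (hu : 0 < u) : 0 ≤ gker t r u := by
  have := kker_nonneg r u hr hu
  unfold gker
  positivity

lemma gker_le (t r u : ℝ) (ht : 1 ≤ t) (hr : 0 < r) (hu : 0 < u) :
    gker t r u ≤ Real.exp 1 * Real.exp (-|(r - t / 2) / √t| / 4) *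
      (u ^ (-(1 : ℝ) / 2) * Real.exp (-(1/4) * u)) := by
  have hk := kker_le r u hr hu
  have hk0 := kker_nonneg r u hr hu
  have hT : 1 ≤ √t := Real.one_le_sqrt.2 ht
  unfold gker
  set z := (r + u - t / 2) / √t with hz
  have hzy : |(r - t / 2) / √t| ≤ |z| + u := by
    have : (r - t / 2) / √t = z - u / √t := by rw [hz]; ring
    rw [this]
    have h1 : |u / √t| ≤ u := by
      rw [abs_of_pos (by positivity)]
      exact div_le_self hu.le hT
    have := abs_sub z (u / √t)
    linarith
  have h2 : (r + u) / t ≤ Real.exp |z| := by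
    have e : (r + u) / t = 1 / 2 + z / √t := by
      rw [hz, div_div, Real.mul_self_sqrt (by linarith)]
      field_simp
      ring
    have : z / √t ≤ |z| := by
      refine (le_abs_self _).trans ?_
      rw [abs_div, abs_of_pos (by positivity : 0 < √t)]
      exact div_le_self (abs_nonneg _) hT
    have := Real.add_one_le_exp |z|
    linarith
  calc _ ≤ Real.exp |z| * Real.exp (-z ^ 2 / 2) * (Real.exp (-u / 2) * u ^ (-(1 : ℝ) / 2)) := by
        gcongr
    _ = Real.exp (|z| + -z ^ 2 / 2 + -u / 2) * u ^ (-(1 : ℝ) / 2) := by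
        rw [Real.exp_add, Real.exp_add]; ring
    _ ≤ Real.exp (1 + -|(r - t / 2) / √t| / 4 + -(1/4) * u) * u ^ (-(1 : ℝ) / 2) := by
        refine mul_le_mul_of_nonneg_right (Real.exp_le_exp.2 ?_) (by positivity)
        rw [← sq_abs z]
        nlinarith [sq_nonneg (|z| - 5 / 4)]
    _ = _ := by rw [Real.exp_add, Real.exp_add]; ring

lemma bd_integrable : IntegrableOn (fun u : ℝ => u ^ (-(1 : ℝ) / 2) * Real.exp (-(1/4) * u))
    (Set.Ioi 0) := by
  have := integrableOn_rpow_mul_exp_neg_mul_rpow (p := 1) (s := -(1 : ℝ) / 2) (b := 1/4)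
    (by norm_num) (by norm_num) (by norm_num)
  simpa using this

lemma pdens_bound (c : ℝ) (hc : 0 < c) : ∃ M : ℝ, 0 ≤ M ∧ ∀ t r : ℝ, 1 ≤ t → 0 < r →
    |√t * pdens c t r| ≤ M * Real.exp (-|(r - t / 2) / √t| / 4) := by
  refine ⟨c * (Real.exp 1 * ∫ u in Set.Ioi (0 : ℝ), u ^ (-(1 : ℝ) / 2) * Real.exp (-(1/4) * u)),
    ?_, ?_⟩
  · have : 0 ≤ ∫ u in Set.Ioi (0 : ℝ), u ^ (-(1 : ℝ) / 2) * Real.exp (-(1/4) * u) := by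
      apply setIntegral_nonneg measurableSet_Ioi
      intro u hu
      have : 0 < u := hu
      positivity
    positivity
  · intro t r ht hr
    rw [sqrt_mul_pdens c t r (by linarith), abs_mul, abs_of_pos hc, mul_assoc]
    gcongr
    rw [← Real.norm_eq_abs]
    refine (norm_integral_le_of_norm_le (bd_integrable.const_mul
      (Real.exp 1 * Real.exp (-|(r - t / 2) / √t| / 4))) ?_).trans ?_
    · filter_upwards [ae_restrict_mem measurableSet_Ioi] with u hu
      rw [Real.norm_eq_abs, abs_of_nonneg (gker_nonneg t r u ht hr hu)]
      exact gker_le t r u ht hr hu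
    · rw [integral_const_mul]
      apply le_of_eq; ring

lemma kker_tendsto (u : ℝ) (hu : 0 < u) : Tendsto (fun r => kker r u) atTop
    (nhds (1 / 2 * Real.exp (-u / 2) * ((Real.exp u - 1) / 2) ^ (-(1 : ℝ) / 2))) := by
  have key : ∀ r, 0 < r → kker r u = ((1 - Real.exp (-r) * Real.exp (-r)) / 2) * Real.exp (-u / 2) *
      ((Real.exp u + Real.exp (-r) * Real.exp (-r) * Real.exp (-u) -
        1 - Real.exp (-r) * Real.exp (-r)) / 2) ^ (-(1 : ℝ) / 2) := by
    intro r hr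
    have h : Real.cosh r < Real.cosh (r + u) := by
      rw [Real.cosh_lt_cosh, abs_of_pos hr, abs_of_pos (by linarith)]; linarith
    have hE : Real.exp r * Real.exp (-r) = 1 := by rw [← Real.exp_add]; simp
    have e1 : ((Real.exp u + Real.exp (-r) * Real.exp (-r) * Real.exp (-u) -
        1 - Real.exp (-r) * Real.exp (-r)) / 2) =
        (Real.cosh (r + u) - Real.cosh r) * Real.exp (-r) := by
      rw [Real.cosh_eq, Real.cosh_eq, neg_add, Real.exp_add, Real.exp_add]
      linear_combination (-(Real.exp u) / 2 + 1 / 2) * hE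
    have e2 : (1 - Real.exp (-r) * Real.exp (-r)) / 2 = Real.sinh r * Real.exp (-r) := by
      rw [Real.sinh_eq]
      linear_combination (-1 / 2) * hE
    rw [e1, e2, Real.mul_rpow (sub_pos.2 h).le (Real.exp_pos _).le, ← Real.exp_mul]
    unfold kker
    have : Real.exp (-(r + u) / 2) = Real.exp (-r) * Real.exp (-u / 2) *
        Real.exp (-r * (-1 / 2)) := by
      rw [← Real.exp_add, ← Real.exp_add]; congr 1; ring
    rw [this]; ring
  have h0 : Tendsto (fun r : ℝ => Real.exp (-r)) atTop (nhds 0) := Real.tendsto_exp_neg_atTop_nhds_zero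
  have h00 := h0.mul h0
  have hpos : 0 < (Real.exp u - 1) / 2 := by
    have := Real.one_lt_exp_iff.2 hu
    linarith
  refine Tendsto.congr' (f₁ := fun r => ((1 - Real.exp (-r) * Real.exp (-r)) / 2) * Real.exp (-u / 2) *
      ((Real.exp u + Real.exp (-r) * Real.exp (-r) * Real.exp (-u) -
        1 - Real.exp (-r) * Real.exp (-r)) / 2) ^ (-(1 : ℝ) / 2)) ?_ ?_
  · filter_upwards [eventually_gt_atTop 0] with r hr using (key r hr).symm
  · refine Tendsto.mul ?_ ?_
    · refine Tendsto.mul_const _ ?_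
      have := (h00.const_sub 1).div_const 2
      simpa using this
    · refine Tendsto.rpow_const ?_ (Or.inl hpos.ne')
      have := (((h00.mul_const (Real.exp (-u))).const_add (Real.exp u)).sub_const 1).sub h00 |>.div_const 2
      simpa using this

lemma pdens_tendsto (c y : ℝ) (ρ : ℝ → ℝ)
    (hρ : Tendsto (fun t => (ρ t - t / 2) / √t) atTop (nhds y))
    (hρ' : Tendsto ρ atTop atTop) :
    Tendsto (fun t => √t * pdens c t (ρ t)) atTop
      (nhds (c * ∫ u in Set.Ioi (0 : ℝ), (1 / 2) * Real.exp (-y ^ 2 / 2) *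
        (1 / 2 * Real.exp (-u / 2) * ((Real.exp u - 1) / 2) ^ (-(1 : ℝ) / 2)))) := by
  have hsq : Tendsto (fun t : ℝ => √t) atTop atTop := Real.tendsto_sqrt_atTop
  refine Tendsto.congr' (f₁ := fun t => c * ∫ u in Set.Ioi (0 : ℝ), gker t (ρ t) u) ?_ ?_
  · filter_upwards [eventually_gt_atTop 0] with t ht using (sqrt_mul_pdens c t _ ht).symm
  refine Tendsto.const_mul c ?_
  refine tendsto_integral_filter_of_dominated_convergence
    (fun u => Real.exp 1 * (u ^ (-(1 : ℝ) / 2) * Real.exp (-(1/4) * u))) ?_ ?_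
    (bd_integrable.const_mul _) ?_
  · refine Eventually.of_forall fun t => Measurable.aestronglyMeasurable ?_
    unfold gker kker
    fun_prop
  · filter_upwards [eventually_ge_atTop 1, hρ'.eventually_gt_atTop 0] with t ht hr
    filter_upwards [ae_restrict_mem measurableSet_Ioi] with u hu
    have hu' : 0 < u := hu
    rw [Real.norm_eq_abs, abs_of_nonneg (gker_nonneg t _ u ht hr hu)]
    refine (gker_le t _ u ht hr hu).trans ?_
    have : Real.exp (-|(ρ t - t / 2) / √t| / 4) ≤ 1 := by
      rw [Real.exp_le_one_iff]
      have := abs_nonneg ((ρ t - t / 2) / √t)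
      linarith
    have h3 : 0 ≤ u ^ (-(1 : ℝ) / 2) * Real.exp (-(1/4) * u) := by positivity
    have h4 : Real.exp 1 * Real.exp (-|(ρ t - t / 2) / √t| / 4) ≤ Real.exp 1 :=
      mul_le_of_le_one_right (Real.exp_pos _).le this
    exact mul_le_mul_of_nonneg_right h4 h3
  · filter_upwards [ae_restrict_mem measurableSet_Ioi] with u hu
    have hz : Tendsto (fun t => (ρ t + u - t / 2) / √t) atTop (nhds y) := by
      have := hρ.add (hsq.const_div_atTop u)
      rw [add_zero] at this
      refine this.congr fun t => ?_
      ring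
    unfold gker
    refine Tendsto.mul (Tendsto.mul ?_ ?_) ((kker_tendsto u hu).comp hρ')
    · have := (hz.div_atTop hsq).const_add (1 / 2)
      rw [add_zero] at this
      refine this.congr' ?_
      filter_upwards [eventually_gt_atTop 0] with t ht
      rw [div_div, Real.mul_self_sqrt ht.le]
      field_simp
      ring
    · exact (Real.continuous_exp.tendsto _).comp ((hz.pow 2).neg.div_const 2)

theorem heat_kernel_L1_regularity (s c : ℝ) (hs : s ∈ Set.Icc (0 : ℝ) 1) (hc : 0 < c) :
    Tendsto (fun t : ℝ => ∫ r in Set.Ioi (0 : ℝ), |pdens c t r - pdens c t (r + s)|)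
      atTop (nhds 0) := by
  obtain ⟨M, hM, hb⟩ := pdens_bound c hc
  obtain ⟨hs0, hs1⟩ := hs
  have hsq : Tendsto (fun t : ℝ => √t) atTop atTop := Real.tendsto_sqrt_atTop
  have h1 : ∀ᶠ t : ℝ in atTop, (∫ y, √t * (Set.Ioi (0:ℝ)).indicator
      (fun r => |pdens c t r - pdens c t (r + s)|) (√t * y + t / 2)) =
      ∫ r in Set.Ioi (0 : ℝ), |pdens c t r - pdens c t (r + s)| := by
    filter_upwards [eventually_gt_atTop 0] with t ht
    have hT : 0 < √t := Real.sqrt_pos.2 ht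
    rw [integral_const_mul, Measure.integral_comp_mul_left
      (fun x => (Set.Ioi (0:ℝ)).indicator
      (fun r => |pdens c t r - pdens c t (r + s)|) (x + t / 2)), integral_add_right_eq_self,
      integral_indicator measurableSet_Ioi, smul_eq_mul, abs_of_pos (by positivity), ← mul_assoc,
      mul_inv_cancel₀ hT.ne', one_mul]
  refine Tendsto.congr' h1 ?_
  have hz0 : (nhds (0 : ℝ)) = nhds (∫ _ : ℝ, (0 : ℝ)) := by rw [integral_zero]
  refine le_trans (b := nhds (∫ _ : ℝ, (0 : ℝ))) ?_ hz0.ge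
  refine tendsto_integral_filter_of_dominated_convergence
    (fun y => (M + M * Real.exp 1) * 32 * (1 + y ^ 2)⁻¹) ?_ ?_
    (integrable_inv_one_add_sq.const_mul _) ?_
  · refine Eventually.of_forall fun t => Measurable.aestronglyMeasurable ?_
    refine Measurable.const_mul ?_ _
    refine Measurable.comp (g := (Set.Ioi (0:ℝ)).indicator
      (fun r => |pdens c t r - pdens c t (r + s)|)) ?_ (by fun_prop)
    refine Measurable.indicator ?_ measurableSet_Ioi
    have := pdens_measurable c t
    have h2 : Measurable (fun r => pdens c t (r + s)) := this.comp (by fun_prop)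
    exact (this.sub h2).abs
  · filter_upwards [eventually_ge_atTop 1] with t ht
    refine Eventually.of_forall fun y => ?_
    have hT : 1 ≤ √t := Real.one_le_sqrt.2 ht
    have hT0 : 0 < √t := by linarith
    have hexp : Real.exp (-|y| / 4) ≤ 32 * (1 + y ^ 2)⁻¹ := by
      have h := Real.quadratic_le_exp_of_nonneg (x := |y| / 4) (by positivity)
      rw [show -|y| / 4 = -(|y| / 4) by ring, Real.exp_neg, ← div_eq_mul_inv,
        inv_le_comm₀ (Real.exp_pos _) (by positivity), inv_div]
      have := sq_abs y
      have := abs_nonneg y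
      nlinarith
    by_cases hr : 0 < √t * y + t / 2
    · rw [Set.indicator_of_mem (Set.mem_Ioi.2 hr), Real.norm_eq_abs, abs_mul, abs_abs, ← abs_mul,
        mul_sub]
      have b1 := hb t _ ht hr
      have b2 := hb t (√t * y + t / 2 + s) ht (by linarith)
      have e1 : (√t * y + t / 2 - t / 2) / √t = y := by field_simp; ring
      have e2 : (√t * y + t / 2 + s - t / 2) / √t = y + s / √t := by field_simp; ring
      rw [e1] at b1
      rw [e2] at b2
      have b3 : Real.exp (-|y + s / √t| / 4) ≤ Real.exp 1 * Real.exp (-|y| / 4) := by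
        rw [← Real.exp_add, Real.exp_le_exp]
        have h1 : |s / √t| ≤ 1 := by
          rw [abs_of_nonneg (by positivity), div_le_one hT0]; linarith
        have h2 := abs_sub (y + s / √t) (s / √t)
        rw [add_sub_cancel_right] at h2
        linarith
      calc _ ≤ _ := abs_sub _ _
        _ ≤ M * Real.exp (-|y| / 4) + M * (Real.exp 1 * Real.exp (-|y| / 4)) :=
          add_le_add b1 (b2.trans (by gcongr))
        _ = (M + M * Real.exp 1) * Real.exp (-|y| / 4) := by ring
        _ ≤ (M + M * Real.exp 1) * (32 * (1 + y ^ 2)⁻¹) := by gcongr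
        _ = _ := by ring
    · rw [Set.indicator_of_notMem (by simpa using hr)]
      simp only [mul_zero, norm_zero]
      positivity
  · refine Eventually.of_forall fun y => ?_
    have hr : Tendsto (fun t : ℝ => √t * y + t / 2) atTop atTop := by
      have : Tendsto (fun t : ℝ => √t * (y + √t / 2)) atTop atTop :=
        hsq.atTop_mul_atTop₀ (tendsto_atTop_add_const_left _ _ (hsq.atTop_div_const (by norm_num)))
      refine this.congr' ?_
      filter_upwards [eventually_gt_atTop 0] with t ht
      have := Real.mul_self_sqrt ht.le
      linear_combination this / 2
    have t1 := pdens_tendsto c y (fun t => √t * y + t / 2) (by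
      refine tendsto_const_nhds.congr' ?_
      filter_upwards [eventually_gt_atTop 0] with t ht
      have hT : 0 < √t := Real.sqrt_pos.2 ht
      field_simp; ring) hr
    have t2 := pdens_tendsto c y (fun t => √t * y + t / 2 + s) (by
      have := (hsq.const_div_atTop s).const_add y
      rw [add_zero] at this
      refine this.congr' ?_
      filter_upwards [eventually_gt_atTop 0] with t ht
      have hT : 0 < √t := Real.sqrt_pos.2 ht
      field_simp; ring) (tendsto_atTop_add_const_right _ _ hr)
    have t3 := (t1.sub t2).abs
    rw [sub_self, abs_zero] at t3
    refine t3.congr' ?_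
    filter_upwards [hr.eventually_gt_atTop 0] with t ht
    rw [Set.indicator_of_mem (Set.mem_Ioi.2 ht), ← mul_sub, abs_mul, abs_of_nonneg (Real.sqrt_nonneg t)]
end

section
/- For every t > 0, the function p_t(r) = π^{−1/2} · e^{−t/8} · t^{−3/2} · sinh(r) · ∫_r^∞ σ·e^{−σ²/(2t)}·(cosh(σ) − cosh(r))^{−1/2} dσ is a probability density on (0,∞); that is, ∫_0^∞ p_t(r) dr = 1. -/
open MeasureTheory Filter Real

lemma hk_h_integral (t : ℝ) (ht : 0 < t) :
    Integrable (fun s : ℝ => s * Real.exp (-s ^ 2 / (2 * t)) * Real.exp (s / 2)) ∧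
    ∫ s : ℝ, s * Real.exp (-s ^ 2 / (2 * t)) * Real.exp (s / 2) =
      Real.exp (t / 8) * (t / 2 * √(2 * π * t)) := by
  have hb : 0 < 1 / (2 * t) := by positivity
  have i1 := integrable_mul_exp_neg_mul_sq hb
  have i2 := (integrable_exp_neg_mul_sq hb).const_mul (t / 2)
  have e : (fun s : ℝ => s * Real.exp (-s ^ 2 / (2 * t)) * Real.exp (s / 2)) =
      fun s => (fun u : ℝ => Real.exp (t / 8) * (u * Real.exp (-(1 / (2 * t)) * u ^ 2) +
        t / 2 * Real.exp (-(1 / (2 * t)) * u ^ 2))) (s - t / 2) := by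
    funext s
    have : Real.exp (-s ^ 2 / (2 * t)) * Real.exp (s / 2) =
      Real.exp (t / 8) * Real.exp (-(1 / (2 * t)) * (s - t / 2) ^ 2) := by
      rw [← Real.exp_add, ← Real.exp_add]
      congr 1
      field_simp
      ring
    simp only
    rw [mul_assoc, this]
    ring
  have i3 := (i1.add i2).const_mul (Real.exp (t / 8))
  constructor
  · rw [e]
    exact i3.comp_sub_right (t / 2)
  · rw [e, integral_sub_right_eq_self (fun u : ℝ => Real.exp (t / 8) *
      (u * Real.exp (-(1 / (2 * t)) * u ^ 2) + t / 2 * Real.exp (-(1 / (2 * t)) * u ^ 2))) (t / 2),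
      integral_const_mul, integral_add i1 i2, integral_const_mul, integral_gaussian]
    have z : ∫ u : ℝ, u * Real.exp (-(1 / (2 * t)) * u ^ 2) = 0 := by
      have := integral_neg_eq_self (fun u : ℝ => u * Real.exp (-(1 / (2 * t)) * u ^ 2)) volume
      simp only [neg_mul, neg_sq, integral_neg] at this
      simp only [neg_mul]
      linarith
    rw [z, zero_add]
    congr 4
    field_simp

lemma hk_K (t : ℝ) (ht : 0 < t) :
    IntegrableOn (fun s : ℝ => s * Real.exp (-s ^ 2 / (2 * t)) * Real.sinh (s / 2)) (Set.Ioi 0) ∧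
    ∫ s in Set.Ioi (0 : ℝ), s * Real.exp (-s ^ 2 / (2 * t)) * Real.sinh (s / 2) =
      Real.exp (t / 8) * (t / 2 * √(2 * π * t)) / 2 := by
  obtain ⟨hi, hv⟩ := hk_h_integral t ht
  set h := fun s : ℝ => s * Real.exp (-s ^ 2 / (2 * t)) * Real.exp (s / 2) with hh
  have e : (fun s : ℝ => s * Real.exp (-s ^ 2 / (2 * t)) * Real.sinh (s / 2)) =
      fun s => (1 / 2) * (h s + h (-s)) := by
    funext s
    simp only [hh, Real.sinh_eq, neg_sq, neg_div 2 s]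
    ring
  have hn := hi.comp_neg
  refine ⟨?_, ?_⟩
  · rw [e]
    exact ((hi.add hn).const_mul (1 / 2)).integrableOn
  · rw [e, integral_const_mul, integral_add hi.integrableOn hn.integrableOn,
      integral_comp_neg_Ioi, neg_zero, add_comm,
      intervalIntegral.integral_Iic_add_Ioi hi.integrableOn hi.integrableOn, hv]
    ring

lemma hk_inner (s : ℝ) (hs : 0 < s) :
    IntegrableOn (fun r : ℝ => Real.sinh r * (Real.cosh s - Real.cosh r) ^ (-(1 : ℝ) / 2))
      (Set.Ioo 0 s) ∧
    ∫ r in Set.Ioo 0 s, Real.sinh r * (Real.cosh s - Real.cosh r) ^ (-(1 : ℝ) / 2) =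
      2 * √2 * Real.sinh (s / 2) := by
  have hpos : ∀ r ∈ Set.Ioo 0 s, 0 < Real.cosh s - Real.cosh r := by
    intro r hr
    have : Real.cosh r < Real.cosh s := by
      rw [Real.cosh_lt_cosh, abs_of_pos hr.1, abs_of_pos hs]
      exact hr.2
    linarith
  have hc : ContinuousOn (fun r : ℝ => -2 * (Real.cosh s - Real.cosh r) ^ ((1 : ℝ) / 2))
      (Set.Icc 0 s) := by
    apply Continuous.continuousOn
    apply continuous_const.mul
    exact (continuous_const.sub Real.continuous_cosh).rpow_const (fun _ => Or.inr (by norm_num))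
  have hd : ∀ r ∈ Set.Ioo 0 s,
      HasDerivAt (fun r : ℝ => -2 * (Real.cosh s - Real.cosh r) ^ ((1 : ℝ) / 2))
        (Real.sinh r * (Real.cosh s - Real.cosh r) ^ (-(1 : ℝ) / 2)) r := by
    intro r hr
    have h1 := (((Real.hasDerivAt_cosh r).const_sub (Real.cosh s)).rpow_const (p := (1 : ℝ) / 2)
      (Or.inl (hpos r hr).ne')).const_mul (-2)
    have h2 : -2 * (-Real.sinh r * (1 / 2) * (Real.cosh s - Real.cosh r) ^ ((1 : ℝ) / 2 - 1)) =
        Real.sinh r * (Real.cosh s - Real.cosh r) ^ (-(1 : ℝ) / 2) := by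
      rw [show (1 : ℝ) / 2 - 1 = -1 / 2 by norm_num]
      ring
    rw [← h2]
    exact h1
  have hi : IntegrableOn (fun r : ℝ => Real.sinh r * (Real.cosh s - Real.cosh r) ^ (-(1 : ℝ) / 2))
      (Set.Ioc 0 s) := by
    apply intervalIntegral.integrableOn_deriv_of_nonneg hc hd
    intro r hr
    exact mul_nonneg (Real.sinh_nonneg_iff.2 hr.1.le) (Real.rpow_nonneg (hpos r hr).le _)
  refine ⟨hi.mono_set Set.Ioo_subset_Ioc_self, ?_⟩
  rw [← integral_Ioc_eq_integral_Ioo, ← intervalIntegral.integral_of_le hs.le,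
    intervalIntegral.integral_eq_sub_of_hasDerivAt_of_le hs.le hc hd
      ((intervalIntegrable_iff_integrableOn_Ioc_of_le hs.le).2 hi)]
  have hx : Real.cosh s - 1 = 2 * Real.sinh (s / 2) ^ 2 := by
    have := Real.cosh_two_mul (s / 2)
    rw [Real.cosh_sq, mul_div_cancel₀ s two_ne_zero] at this
    linarith
  have hp : 0 ≤ Real.sinh (s / 2) := Real.sinh_nonneg_iff.2 (by linarith)
  rw [Real.cosh_zero, sub_self, Real.zero_rpow (by norm_num), hx, ← Real.sqrt_eq_rpow,
    Real.sqrt_mul (by norm_num), Real.sqrt_sq hp]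
  ring

/-- The joint integrand. -/
noncomputable def hkF (t r s : ℝ) : ℝ :=
  Set.indicator {p : ℝ × ℝ | 0 < p.1 ∧ p.1 < p.2}
    (fun p => Real.sinh p.1 * (p.2 * Real.exp (-p.2 ^ 2 / (2 * t)) *
      (Real.cosh p.2 - Real.cosh p.1) ^ (-(1 : ℝ) / 2))) (r, s)

lemma hkF_slice (t s : ℝ) : (fun r => hkF t r s) = Set.indicator (Set.Ioo 0 s)
    (fun r => s * Real.exp (-s ^ 2 / (2 * t)) *
      (Real.sinh r * (Real.cosh s - Real.cosh r) ^ (-(1 : ℝ) / 2))) := by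
  funext r
  unfold hkF
  by_cases h : 0 < r ∧ r < s
  · rw [Set.indicator_of_mem (by exact h), Set.indicator_of_mem (by exact h)]
    ring
  · rw [Set.indicator_of_notMem (by exact h), Set.indicator_of_notMem (by exact h)]

lemma hkF_slice_int (t s : ℝ) : Integrable (fun r => hkF t r s) ∧ ∫ r, hkF t r s =
    Set.indicator (Set.Ioi 0)
      (fun s => 2 * √2 * (s * Real.exp (-s ^ 2 / (2 * t)) * Real.sinh (s / 2))) s := by
  rw [hkF_slice]
  rcases le_or_gt s 0 with hs | hs
  · rw [Set.Ioo_eq_empty (not_lt.2 hs), Set.indicator_empty,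
      Set.indicator_of_notMem (by simpa using hs)]
    simp
  · obtain ⟨a, b⟩ := hk_inner s hs
    rw [Set.indicator_of_mem (by exact hs), integral_indicator measurableSet_Ioo,
      integrable_indicator_iff measurableSet_Ioo, integral_const_mul, b]
    exact ⟨a.const_mul _, by ring⟩

lemma hkF_nonneg (t r s : ℝ) : 0 ≤ hkF t r s := by
  apply Set.indicator_nonneg
  rintro ⟨r, s⟩ ⟨h1, h2⟩
  simp only at h1 h2 ⊢
  have : Real.cosh r < Real.cosh s := by
    rw [Real.cosh_lt_cosh, abs_of_pos h1, abs_of_pos (h1.trans h2)]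
    exact h2
  have h3 := Real.rpow_nonneg (sub_nonneg.2 this.le) (-(1 : ℝ) / 2)
  have h4 := Real.sinh_nonneg_iff.2 h1.le
  have h5 := (h1.trans h2).le
  positivity

lemma hkF_integrable (t : ℝ) (ht : 0 < t) :
    Integrable (Function.uncurry (hkF t)) (volume.prod volume) := by
  have hm : Measurable (Function.uncurry (hkF t)) := by
    unfold hkF Function.uncurry
    apply Measurable.indicator
    · have := Real.continuous_sinh.measurable
      have := Real.continuous_cosh.measurable
      fun_prop
    · exact (measurableSet_lt measurable_const measurable_fst).inter
        (measurableSet_lt measurable_fst measurable_snd)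
  rw [integrable_prod_iff' hm.aestronglyMeasurable]
  refine ⟨Eventually.of_forall fun s => (hkF_slice_int t s).1, ?_⟩
  simp only [Function.uncurry, Real.norm_of_nonneg (hkF_nonneg _ _ _), (hkF_slice_int t _).2]
  exact (integrable_indicator_iff measurableSet_Ioi).2 ((hk_K t ht).1.const_mul _)

theorem heat_kernel_is_probability_density (t : ℝ) (ht : 0 < t) :
    ∫ r in Set.Ioi (0 : ℝ), pdens (Real.pi ^ (-(1 : ℝ) / 2)) t r = 1 := by
  have key : ∫ r in Set.Ioi (0 : ℝ), pdens (Real.pi ^ (-(1 : ℝ) / 2)) t r =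
      Real.pi ^ (-(1 : ℝ) / 2) * Real.exp (-t / 8) * t ^ (-(3 : ℝ) / 2) *
        ∫ r, ∫ s, hkF t r s := by
    rw [← integral_const_mul, ← integral_indicator measurableSet_Ioi]
    congr 1
    funext r
    by_cases hr : 0 < r
    · rw [Set.indicator_of_mem (by exact hr)]
      have : (fun s => hkF t r s) = Set.indicator (Set.Ioi r) (fun s => Real.sinh r *
          (s * Real.exp (-s ^ 2 / (2 * t)) * (Real.cosh s - Real.cosh r) ^ (-(1 : ℝ) / 2))) := by
        funext s
        unfold hkF
        by_cases h : r < s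
        · rw [Set.indicator_of_mem (by exact ⟨hr, h⟩), Set.indicator_of_mem (by exact h)]
        · rw [Set.indicator_of_notMem (fun h' => h h'.2), Set.indicator_of_notMem (by exact h)]
      rw [this, integral_indicator measurableSet_Ioi, integral_const_mul, pdens]
      ring
    · rw [Set.indicator_of_notMem (by exact hr)]
      have : (fun s => hkF t r s) = fun _ => 0 := by
        funext s
        unfold hkF
        rw [Set.indicator_of_notMem (fun h' => hr h'.1)]
      rw [this]
      simp
  rw [key, integral_integral_swap (hkF_integrable t ht)]
  simp only [(hkF_slice_int t _).2]
  rw [integral_indicator measurableSet_Ioi, integral_const_mul, (hk_K t ht).2]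
  have a1 : Real.exp (-t / 8) * Real.exp (t / 8) = 1 := by
    rw [← Real.exp_add]
    simp [neg_div]
  have a2 : π ^ (-(1 : ℝ) / 2) * √π = 1 := by
    rw [Real.sqrt_eq_rpow, ← Real.rpow_add Real.pi_pos]
    norm_num
  have a3 : t ^ (-(3 : ℝ) / 2) * (t * √t) = 1 := by
    rw [Real.sqrt_eq_rpow]
    nth_rewrite 2 [← Real.rpow_one t]
    rw [← Real.rpow_add ht, ← Real.rpow_add ht]
    norm_num
  have a4 : √2 * √2 = 2 := Real.mul_self_sqrt (by norm_num)
  rw [Real.sqrt_mul (by positivity), Real.sqrt_mul (by norm_num)]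
  calc _ = (Real.exp (-t / 8) * Real.exp (t / 8)) * (π ^ (-(1 : ℝ) / 2) * √π) *
        (t ^ (-(3 : ℝ) / 2) * (t * √t)) * ((√2 * √2) / 2) := by ring
    _ = 1 := by
      rw [a1, a2, a3, a4]
      norm_num
end

section
/- For every R > 0 and every constant c > 0, letting p_t(r) = c · e^{−t/8} · t^{−3/2} · sinh(r) · ∫_r^∞ σ·e^{−σ²/(2t)}·(cosh(σ) − cosh(r))^{−1/2} dσ, the proportion of mass of p_t in (0,R) tends to zero: lim_{t→∞} (∫_0^R p_t(r) dr) / (∫_0^∞ p_t(r) dr) = 0. -/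
open MeasureTheory Filter Real

lemma aux_cosh_lower (r s : ℝ) (hr : 0 < r) (hs : r < s) :
    Real.sinh r * ((s - r) * Real.exp ((s - r) / 2)) ≤ Real.cosh s - Real.cosh r := by
  obtain ⟨x, hx⟩ : ∃ x, x = (s - r) / 2 := ⟨_, rfl⟩
  have hs' : s = (r + x) + x := by rw [hx]; ring
  have hr' : Real.cosh r = Real.cosh ((r + x) - x) := by congr 1; ring
  have hx0 : 0 < x := by rw [hx]; linarith
  have h1 : Real.cosh s - Real.cosh r = 2 * Real.sinh (r + x) * Real.sinh x := by
    rw [hr', hs', Real.cosh_add (r + x) x, Real.cosh_sub (r + x) x]; ring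
  rw [h1, ← hx, show s - r = 2 * x by rw [hx]; ring]
  have h2 : x ≤ Real.sinh x := Real.self_le_sinh_iff.2 hx0.le
  have h3 : Real.sinh r * Real.exp x ≤ Real.sinh (r + x) := by
    rw [Real.sinh_add, ← Real.cosh_add_sinh x]
    have : Real.sinh r ≤ Real.cosh r := (Real.sinh_lt_cosh r).le
    nlinarith
  have h4 : 0 < Real.sinh r := Real.sinh_pos_iff.2 hr
  have h5 : Real.sinh r * Real.exp x * x ≤ Real.sinh (r + x) * Real.sinh x := by
    have := Real.exp_pos x
    gcongr
  linarith

noncomputable def auxG (R : ℝ) : ℝ → ℝ :=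
  Set.indicator (Set.Ioi 0)
    (fun u => R * (u ^ (-(1 : ℝ) / 2) * Real.exp (-(1 / 4) * u)) +
      u ^ ((1 : ℝ) / 2) * Real.exp (-(1 / 4) * u))

lemma auxG_int (R : ℝ) : Integrable (auxG R) := by
  unfold auxG
  rw [integrable_indicator_iff measurableSet_Ioi]
  have h1 := integrableOn_rpow_mul_exp_neg_mul_rpow (s := -(1 : ℝ) / 2) (p := 1) (b := 1 / 4)
    (by norm_num) (by norm_num) (by norm_num)
  have h2 := integrableOn_rpow_mul_exp_neg_mul_rpow (s := (1 : ℝ) / 2) (p := 1) (b := 1 / 4)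
    (by norm_num) (by norm_num) (by norm_num)
  simp only [Real.rpow_one] at h1 h2
  exact (h1.const_mul R).add h2

lemma auxG_nonneg (R : ℝ) (hR : 0 < R) (u : ℝ) : 0 ≤ auxG R u := by
  unfold auxG
  apply Set.indicator_nonneg
  intro u hu
  have : (0 : ℝ) < u := hu
  positivity

noncomputable def auxf (t r s : ℝ) : ℝ :=
  s * Real.exp (-s ^ 2 / (2 * t)) * (Real.cosh s - Real.cosh r) ^ (-(1 : ℝ) / 2)

lemma auxf_nonneg (t r s : ℝ) (hr : 0 < r) (hs : r < s) : 0 ≤ auxf t r s := by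
  have : Real.cosh r < Real.cosh s := by
    rw [Real.cosh_lt_cosh, abs_of_pos hr, abs_of_pos (hr.trans hs)]; exact hs
  have h2 : 0 ≤ Real.cosh s - Real.cosh r := by linarith
  have h3 : 0 ≤ s := by linarith
  unfold auxf
  positivity

lemma auxf_le (R t r s : ℝ) (ht : 0 < t) (hr : 0 < r) (hrR : r ≤ R) (hs : r < s) :
    auxf t r s ≤ (Real.sinh r) ^ (-(1 : ℝ) / 2) * auxG R (s - r) := by
  have hu : 0 < s - r := by linarith
  have h4 : 0 < Real.sinh r := Real.sinh_pos_iff.2 hr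
  unfold auxf auxG
  rw [Set.indicator_of_mem (show s - r ∈ Set.Ioi (0 : ℝ) from hu)]
  have h1 : (Real.cosh s - Real.cosh r) ^ (-(1 : ℝ) / 2) ≤
      (Real.sinh r * ((s - r) * Real.exp ((s - r) / 2))) ^ (-(1 : ℝ) / 2) :=
    Real.rpow_le_rpow_of_nonpos (by positivity) (aux_cosh_lower r s hr hs) (by norm_num)
  have h2 : Real.exp (-s ^ 2 / (2 * t)) ≤ 1 := by
    rw [Real.exp_le_one_iff]
    apply div_nonpos_of_nonpos_of_nonneg <;> nlinarith [sq_nonneg s]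
  rw [Real.mul_rpow h4.le (by positivity), Real.mul_rpow hu.le (by positivity),
    ← Real.exp_mul] at h1
  have h3 : (s - r) / 2 * (-(1 : ℝ) / 2) = -(1 / 4) * (s - r) := by ring
  rw [h3] at h1
  have h5 : (s - r) ^ ((1 : ℝ) / 2) = (s - r) * (s - r) ^ (-(1 : ℝ) / 2) := by
    rw [show ((1 : ℝ) / 2) = 1 + (-(1 : ℝ) / 2) by norm_num, Real.rpow_add hu, Real.rpow_one]
  rw [h5]
  have hs0 : 0 < s := by linarith
  have h6 : 0 ≤ Real.cosh s - Real.cosh r :=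
    le_trans (by positivity) (aux_cosh_lower r s hr hs)
  calc _ ≤ (R + (s - r)) * 1 * (Real.sinh r ^ (-(1 : ℝ) / 2) * ((s - r) ^ (-(1 : ℝ) / 2) *
        Real.exp (-(1 / 4) * (s - r)))) := by
        gcongr
        all_goals linarith
    _ = _ := by ring

lemma auxf_int (t r : ℝ) (ht : 0 < t) (hr : 0 < r) : IntegrableOn (auxf t r) (Set.Ioi r) := by
  have h := (((auxG_int r).comp_sub_right r).const_mul
    ((Real.sinh r) ^ (-(1 : ℝ) / 2))).integrableOn (s := Set.Ioi r)
  refine Integrable.mono' h ?_ ?_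
  · apply Measurable.aestronglyMeasurable
    unfold auxf
    fun_prop
  · refine (ae_restrict_iff' measurableSet_Ioi).2 (Eventually.of_forall fun s hs => ?_)
    rw [Real.norm_of_nonneg (auxf_nonneg t r s hr hs)]
    exact auxf_le r t r s ht hr le_rfl hs

noncomputable def auxq (t r : ℝ) : ℝ := Real.sinh r * ∫ s in Set.Ioi r, auxf t r s

lemma auxq_nonneg (t r : ℝ) (hr : 0 < r) : 0 ≤ auxq t r :=
  mul_nonneg (Real.sinh_pos_iff.2 hr).le
    (setIntegral_nonneg measurableSet_Ioi fun s hs => auxf_nonneg t r s hr hs)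

lemma auxq_le (R t r : ℝ) (ht : 0 < t) (hr : 0 < r) (hrR : r ≤ R) :
    auxq t r ≤ (Real.sinh R) ^ ((1 : ℝ) / 2) * ∫ u, auxG R u := by
  have hR : 0 < R := by linarith
  have h4 : 0 < Real.sinh r := Real.sinh_pos_iff.2 hr
  have hi := ((auxG_int R).comp_sub_right r).const_mul ((Real.sinh r) ^ (-(1 : ℝ) / 2))
  have h1 : ∫ s in Set.Ioi r, auxf t r s ≤ (Real.sinh r) ^ (-(1 : ℝ) / 2) * ∫ u, auxG R u := by
    calc _ ≤ ∫ s in Set.Ioi r, (Real.sinh r) ^ (-(1 : ℝ) / 2) * auxG R (s - r) :=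
          setIntegral_mono_on (auxf_int t r ht hr) hi.integrableOn measurableSet_Ioi
            fun s hs => auxf_le R t r s ht hr hrR hs
      _ ≤ ∫ s, (Real.sinh r) ^ (-(1 : ℝ) / 2) * auxG R (s - r) :=
          setIntegral_le_integral hi (Eventually.of_forall fun s =>
            mul_nonneg (by positivity) (auxG_nonneg R hR _))
      _ = _ := by
          rw [integral_const_mul, integral_sub_right_eq_self (auxG R) r]
  have hG : 0 ≤ ∫ u, auxG R u := integral_nonneg (auxG_nonneg R hR)
  have h5 : Real.sinh r * (Real.sinh r) ^ (-(1 : ℝ) / 2) = Real.sinh r ^ ((1 : ℝ) / 2) := by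
    rw [show ((1 : ℝ) / 2) = 1 + (-(1 : ℝ) / 2) by norm_num, Real.rpow_add h4, Real.rpow_one]
  calc auxq t r ≤ Real.sinh r * ((Real.sinh r) ^ (-(1 : ℝ) / 2) * ∫ u, auxG R u) := by
        unfold auxq; gcongr
    _ = Real.sinh r ^ ((1 : ℝ) / 2) * ∫ u, auxG R u := by rw [← mul_assoc, h5]
    _ ≤ _ := by
        have := Real.sinh_le_sinh.2 hrR
        gcongr

lemma auxq_ge (M t r : ℝ) (hr : 1 ≤ r) (hrM : r ≤ M) (ht : (M + 1) ^ 2 ≤ t) :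
    Real.exp (-1) / 4 ≤ auxq t r := by
  have hr0 : 0 < r := by linarith
  have ht0 : 0 < t := lt_of_lt_of_le (by nlinarith) ht
  have hpt : ∀ s ∈ Set.Ioc r (r + 1), Real.exp (-1) * Real.exp (-r) ≤ auxf t r s := by
    rintro s ⟨hs1, hs2⟩
    have hd : 0 < Real.cosh s - Real.cosh r := by
      rw [sub_pos, Real.cosh_lt_cosh, abs_of_pos hr0, abs_of_pos (hr0.trans hs1)]; exact hs1
    have hc : Real.cosh s ≤ Real.exp (2 * r) := by
      rw [Real.cosh_eq]
      have : Real.exp (-s) ≤ Real.exp s := Real.exp_le_exp.2 (by linarith)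
      have : Real.exp s ≤ Real.exp (2 * r) := Real.exp_le_exp.2 (by linarith)
      linarith
    have h1 : Real.exp (-r) ≤ (Real.cosh s - Real.cosh r) ^ (-(1 : ℝ) / 2) := by
      have := Real.rpow_le_rpow_of_nonpos (z := -(1 : ℝ) / 2) hd
        (show Real.cosh s - Real.cosh r ≤ Real.exp (2 * r) by linarith [Real.cosh_pos r])
        (by norm_num)
      rw [← Real.exp_mul] at this
      convert this using 2
      ring
    have h2 : Real.exp (-1) ≤ Real.exp (-s ^ 2 / (2 * t)) := by
      rw [Real.exp_le_exp, le_div_iff₀ (by positivity)]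
      nlinarith
    unfold auxf
    have h3 : Real.exp (-1) ≤ s * Real.exp (-s ^ 2 / (2 * t)) := by
      nlinarith [Real.exp_pos (-s ^ 2 / (2 * t))]
    have : 0 < s := by linarith
    gcongr
  have h1 : Real.exp (-1) * Real.exp (-r) ≤ ∫ s in Set.Ioi r, auxf t r s := by
    calc _ = ∫ s in Set.Ioc r (r + 1), Real.exp (-1) * Real.exp (-r) := by simp
      _ ≤ ∫ s in Set.Ioc r (r + 1), auxf t r s :=
          setIntegral_mono_on (continuous_const.integrableOn_Ioc) ((auxf_int t r ht0 hr0).mono_set Set.Ioc_subset_Ioi_self)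
            measurableSet_Ioc hpt
      _ ≤ _ := setIntegral_mono_set (auxf_int t r ht0 hr0)
          ((ae_restrict_iff' measurableSet_Ioi).2
            (Eventually.of_forall fun s hs => auxf_nonneg t r s hr0 hs))
          (Set.Ioc_subset_Ioi_self.eventuallyLE)
  have h2 : Real.exp r / 4 ≤ Real.sinh r := by
    rw [Real.sinh_eq]
    have a : Real.exp (-r) ≤ 1 := Real.exp_le_one_iff.2 (by linarith)
    have b : r + 1 ≤ Real.exp r := Real.add_one_le_exp r
    linarith
  have h3 : Real.exp r * Real.exp (-r) = 1 := by rw [← Real.exp_add]; simp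
  calc Real.exp (-1) / 4 = Real.exp r / 4 * (Real.exp (-1) * Real.exp (-r)) := by
        linear_combination (-Real.exp (-1) / 4) * h3
    _ ≤ _ := by
        unfold auxq
        have := (Real.sinh_pos_iff.2 hr0).le
        gcongr

theorem mass_near_origin_tendsto_zero (R c : ℝ) (hR : 0 < R) (hc : 0 < c) :
    Tendsto
      (fun t : ℝ =>
        (∫ r in Set.Ioo (0 : ℝ) R, pdens c t r) / ∫ r in Set.Ioi (0 : ℝ), pdens c t r)
      atTop (nhds 0) := by
  set C : ℝ := ((Real.sinh R) ^ ((1 : ℝ) / 2) * ∫ u, auxG R u) * R with hC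
  have hG : 0 ≤ ∫ u, auxG R u := integral_nonneg (auxG_nonneg R hR)
  have hsR := Real.sinh_pos_iff.2 hR
  have hC0 : 0 ≤ C := by positivity
  rw [Metric.tendsto_atTop]
  intro ε hε
  have he := Real.exp_pos (-1)
  set L : ℝ := (C + 1) / ε * (4 / Real.exp (-1)) with hL
  have hL0 : 0 < L := by positivity
  refine ⟨(L + 1 + 1) ^ 2, fun t ht => ?_⟩
  have ht0 : 0 < t := lt_of_lt_of_le (by positivity) ht
  have hk : 0 < c * Real.exp (-t / 8) * t ^ (-(3 : ℝ) / 2) := by positivity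
  have hp : ∀ r, pdens c t r = c * Real.exp (-t / 8) * t ^ (-(3 : ℝ) / 2) * auxq t r := by
    intro r
    simp only [pdens, auxq, auxf]
    ring
  simp only [hp, integral_const_mul]
  rw [mul_div_mul_left _ _ hk.ne', dist_zero_right]
  by_cases hint : IntegrableOn (auxq t) (Set.Ioi 0)
  swap
  · rw [integral_undef hint]; simpa using hε
  have hN : ‖∫ r in Set.Ioo (0 : ℝ) R, auxq t r‖ ≤ C := by
    have := norm_setIntegral_le_of_norm_le_const (μ := volume) (s := Set.Ioo (0 : ℝ) R)
      (f := auxq t) (C := (Real.sinh R) ^ ((1 : ℝ) / 2) * ∫ u, auxG R u) (by simp)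
      (fun r hr => by
        rw [Real.norm_of_nonneg (auxq_nonneg t r hr.1)]
        exact auxq_le R t r ht0 hr.1 hr.2.le)
    simpa [hC, hR.le] using this
  have hD : (C + 1) / ε ≤ ∫ r in Set.Ioi (0 : ℝ), auxq t r := by
    have hsub : Set.Ioc (1 : ℝ) (L + 1) ⊆ Set.Ioi 0 := fun r hr =>
      lt_trans one_pos hr.1
    calc (C + 1) / ε = ∫ r in Set.Ioc (1 : ℝ) (L + 1), Real.exp (-1) / 4 := by
          simp [hL0.le]
          rw [hL]; field_simp
      _ ≤ ∫ r in Set.Ioc (1 : ℝ) (L + 1), auxq t r :=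
          setIntegral_mono_on (continuous_const.integrableOn_Ioc) (hint.mono_set hsub)
            measurableSet_Ioc fun r hr => auxq_ge (L + 1) t r hr.1.le hr.2 ht
      _ ≤ _ := setIntegral_mono_set hint
          ((ae_restrict_iff' measurableSet_Ioi).2
            (Eventually.of_forall fun s hs => auxq_nonneg t s hs))
          hsub.eventuallyLE
  have hpos : 0 < (C + 1) / ε := by positivity
  have hDpos := lt_of_lt_of_le hpos hD
  rw [norm_div, Real.norm_of_nonneg hDpos.le, div_lt_iff₀ hDpos]
  rw [div_le_iff₀ hε] at hD
  linarith
end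

section
/- For every bounded continuous function u : [0,∞) → ℝ, every s ∈ [0,1], and every constant c > 0, letting p_t(r) = c · e^{−t/8} · t^{−3/2} · sinh(r) · ∫_r^∞ σ·e^{−σ²/(2t)}·(cosh(σ) − cosh(r))^{−1/2} dσ, one has lim_{t→∞} ( ∫_0^∞ p_t(r)·u(r) dr − ∫_0^∞ p_t(r+s)·u(r) dr ) = 0. -/
open MeasureTheory Filter Real

noncomputable def wf (c t σ : ℝ) : ℝ :=
  c * Real.exp (-t / 8) * t ^ (-(3 : ℝ) / 2) * (σ * Real.exp (-σ ^ 2 / (2 * t)))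

noncomputable def Kf (s σ r : ℝ) : ℝ :=
  Real.sinh (r + s) * (Real.cosh (σ + s) - Real.cosh (r + s)) ^ (-(1 : ℝ) / 2)

noncomputable def kf (s σ r : ℝ) : ℝ := if r < σ then Kf s σ r else 0

lemma cosh_sub_pos {s σ r : ℝ} (hs : 0 ≤ s) (hr : 0 ≤ r) (h : r < σ) :
    0 < Real.cosh (σ + s) - Real.cosh (r + s) := by
  rw [sub_pos, Real.cosh_lt_cosh, abs_of_nonneg (by linarith), abs_of_nonneg (by linarith)]
  linarith

lemma Kf_eq {s σ r : ℝ} (hs : 0 ≤ s) (hr : 0 ≤ r) (h : r < σ) :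
    Kf s σ r = Real.sinh (r + s) / √(Real.cosh (σ + s) - Real.cosh (r + s)) := by
  rw [Kf, show (-(1 : ℝ) / 2) = -(1/2) by norm_num, Real.rpow_neg (cosh_sub_pos hs hr h).le,
    ← Real.sqrt_eq_rpow, div_eq_mul_inv]

lemma Kf_nonneg {s σ r : ℝ} (hs : 0 ≤ s) (hr : 0 ≤ r) (h : r < σ) : 0 ≤ Kf s σ r := by
  rw [Kf_eq hs hr h]
  exact div_nonneg (Real.sinh_nonneg_iff.2 (by linarith)) (Real.sqrt_nonneg _)

lemma kf_nonneg {s σ r : ℝ} (hs : 0 ≤ s) (hr : 0 ≤ r) : 0 ≤ kf s σ r := by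
  unfold kf
  split_ifs with h
  · exact Kf_nonneg hs hr h
  · exact le_rfl

lemma Kf_mono {s σ r : ℝ} (hs : 0 ≤ s) (hr : 0 ≤ r) (h : r < σ) :
    Real.exp (s / 2) * Kf 0 σ r ≤ Kf s σ r := by
  rw [Kf_eq hs hr h, Kf_eq le_rfl hr h]
  have hD0 := cosh_sub_pos le_rfl hr h
  have hDs := cosh_sub_pos hs hr h
  simp only [add_zero] at *
  have h0 : 0 ≤ Real.sinh r := Real.sinh_nonneg_iff.2 hr
  have h1 : 0 ≤ Real.sinh (r + s) := Real.sinh_nonneg_iff.2 (by linarith)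
  have h2 : Real.exp s * Real.sinh r ≤ Real.sinh (r + s) := by
    rw [Real.sinh_eq, Real.sinh_eq]
    have : Real.exp s * Real.exp r = Real.exp (r + s) := by rw [← Real.exp_add]; ring_nf
    have h3 : Real.exp (-(r + s)) ≤ Real.exp s * Real.exp (-r) := by
      rw [← Real.exp_add]; apply Real.exp_le_exp.2; linarith
    linarith
  have h3 : Real.sinh r * (Real.cosh (σ + s) - Real.cosh (r + s)) ≤
      Real.sinh (r + s) * (Real.cosh σ - Real.cosh r) := by
    have e : Real.sinh (r + s) * (Real.cosh σ - Real.cosh r) -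
      Real.sinh r * (Real.cosh (σ + s) - Real.cosh (r + s)) =
        Real.sinh s * (Real.cosh (σ - r) - 1) := by
      rw [Real.sinh_add, Real.cosh_add, Real.cosh_add, Real.cosh_sub]
      linear_combination (-Real.sinh s) * Real.cosh_sq r
    have : 0 ≤ Real.sinh s * (Real.cosh (σ - r) - 1) :=
      mul_nonneg (Real.sinh_nonneg_iff.2 hs) (by linarith [Real.one_le_cosh (σ - r)])
    linarith
  rw [← mul_div_assoc, div_le_div_iff₀ (Real.sqrt_pos.2 hD0) (Real.sqrt_pos.2 hDs)]
  apply (pow_le_pow_iff_left₀ (by positivity) (by positivity) two_ne_zero).1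
  rw [mul_pow, mul_pow, mul_pow, Real.sq_sqrt hD0.le, Real.sq_sqrt hDs.le,
    ← Real.exp_nat_mul]
  have : ((2 : ℕ) : ℝ) * (s / 2) = s := by push_cast; ring
  rw [this]
  calc _ = (Real.exp s * Real.sinh r) * (Real.sinh r * (Real.cosh (σ + s) - Real.cosh (r + s))) := by ring
    _ ≤ Real.sinh (r + s) * (Real.sinh (r + s) * (Real.cosh σ - Real.cosh r)) := by
      apply mul_le_mul h2 h3 (mul_nonneg h0 hDs.le) h1
    _ = _ := by ring

lemma kf_mono {s σ r : ℝ} (hs : 0 ≤ s) (hr : 0 ≤ r) :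
    Real.exp (s / 2) * kf 0 σ r ≤ kf s σ r := by
  unfold kf
  split_ifs with h
  · exact Kf_mono hs hr h
  · simp

lemma Kf_deriv {s σ r : ℝ} (hs : 0 ≤ s) (hr : 0 ≤ r) (h : r < σ) :
    HasDerivAt (fun r => -2 * √(Real.cosh (σ + s) - Real.cosh (r + s))) (Kf s σ r) r := by
  have h1 : HasDerivAt (fun r => Real.cosh (σ + s) - Real.cosh (r + s))
      (-(Real.sinh (r + s) * 1)) r :=
    (((hasDerivAt_id r).add_const s).cosh).const_sub _
  have := (h1.sqrt (cosh_sub_pos hs hr h).ne').const_mul (-2)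
  rw [Kf_eq hs hr h]
  refine this.congr_deriv ?_
  ring

lemma kf_int {s σ : ℝ} (hs : 0 ≤ s) (hσ : 0 < σ) :
    Integrable (kf s σ) (volume.restrict (Set.Ioi 0)) ∧
    ∫ r in Set.Ioi 0, kf s σ r = 2 * √(Real.cosh (σ + s) - Real.cosh s) := by
  have hcont : ContinuousOn (fun r => -2 * √(Real.cosh (σ + s) - Real.cosh (r + s))) (Set.Icc 0 σ) := by
    fun_prop
  have hi : IntegrableOn (Kf s σ) (Set.Ioc 0 σ) := by
    apply intervalIntegral.integrableOn_deriv_of_nonneg hcont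
    · intro x hx; exact Kf_deriv hs hx.1.le hx.2
    · intro x hx; exact Kf_nonneg hs hx.1.le hx.2
  have hv : ∫ r in (0:ℝ)..σ, Kf s σ r = 2 * √(Real.cosh (σ + s) - Real.cosh s) := by
    rw [intervalIntegral.integral_eq_sub_of_hasDerivAt_of_le hσ.le hcont]
    · simp
    · intro x hx; exact Kf_deriv hs hx.1.le hx.2
    · rwa [intervalIntegrable_iff_integrableOn_Ioc_of_le hσ.le]
  have hk : kf s σ = Set.indicator (Set.Iio σ) (Kf s σ) := by
    ext r; simp [kf, Set.indicator_apply]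
  have hset : Set.Iio σ ∩ Set.Ioi 0 = Set.Ioo 0 σ := by ext x; simp [and_comm]
  constructor
  · rw [hk, integrable_indicator_iff measurableSet_Iio, IntegrableOn,
      Measure.restrict_restrict measurableSet_Iio, hset]
    exact hi.mono_set Set.Ioo_subset_Ioc_self
  · rw [hk, integral_indicator measurableSet_Iio, Measure.restrict_restrict measurableSet_Iio, hset,
      ← integral_Ioc_eq_integral_Ioo, ← intervalIntegral.integral_of_le hσ.le, hv]

lemma two_sqrt_cosh {x : ℝ} (hx : 0 ≤ x) :
    2 * √(Real.cosh x - 1) = √2 * (Real.exp (x / 2) - Real.exp (-(x / 2))) := by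
  have h : Real.cosh x - 1 = 2 * (Real.sinh (x / 2)) ^ 2 := by
    have := Real.cosh_two_mul (x / 2)
    rw [show 2 * (x / 2) = x by ring, Real.cosh_sq] at this
    linarith
  rw [h, Real.sqrt_mul (by norm_num), Real.sqrt_sq (Real.sinh_nonneg_iff.2 (by linarith)),
    Real.sinh_eq]
  ring

lemma kf_le' {s σ : ℝ} (hs : 0 ≤ s) (hσ : 0 ≤ σ) :
    2 * √(Real.cosh (σ + s) - Real.cosh s) ≤
      √2 * (Real.exp ((σ + s) / 2) - Real.exp (-((σ + s) / 2))) := by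
  rw [← two_sqrt_cosh (by linarith)]
  have := Real.one_le_cosh s
  gcongr

lemma kf_le {s σ : ℝ} (hs : 0 ≤ s) (hσ : 0 ≤ σ) :
    2 * √(Real.cosh (σ + s) - Real.cosh s) ≤ √2 * Real.exp ((σ + s) / 2) := by
  refine (kf_le' hs hσ).trans ?_
  gcongr
  linarith [Real.exp_pos (-((σ + s) / 2))]

lemma E_le {s σ : ℝ} (hs : 0 ≤ s) (hs1 : s ≤ 1) (hσ : 0 ≤ σ) :
    2 * √(Real.cosh (σ + s) - Real.cosh s) -
      Real.exp (s / 2) * (2 * √(Real.cosh (σ + 0) - Real.cosh 0)) ≤ √2 * Real.exp (1 / 2) := by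
  have h1 := kf_le hs hσ
  rw [add_zero, Real.cosh_zero, two_sqrt_cosh hσ]
  have h2 : Real.exp ((σ + s) / 2) = Real.exp (s / 2) * Real.exp (σ / 2) := by
    rw [← Real.exp_add]; ring_nf
  have h3 : Real.exp (s / 2) * Real.exp (-(σ / 2)) ≤ Real.exp (1 / 2) := by
    rw [← Real.exp_add]; apply Real.exp_le_exp.2; linarith
  have h4 : √2 * (Real.exp (s / 2) * Real.exp (-(σ / 2))) ≤ √2 * Real.exp (1 / 2) := by gcongr
  rw [h2] at h1
  linarith

noncomputable def gf (c t σ : ℝ) : ℝ := wf c t σ * Real.exp (σ / 2)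

lemma wf_nonneg {c t σ : ℝ} (hc : 0 < c) (ht : 0 < t) (hσ : 0 ≤ σ) : 0 ≤ wf c t σ := by
  unfold wf; positivity

lemma gf_eq {c t : ℝ} (ht : 0 < t) (σ : ℝ) : gf c t σ =
    c * t ^ (-(3 : ℝ) / 2) * (σ * Real.exp (-(1 / (2 * t)) * (σ - t / 2) ^ 2)) := by
  unfold gf wf
  have : Real.exp (-(1 / (2 * t)) * (σ - t / 2) ^ 2) =
      Real.exp (-t / 8) * Real.exp (-σ ^ 2 / (2 * t)) * Real.exp (σ / 2) := by
    rw [← Real.exp_add, ← Real.exp_add]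
    congr 1
    field_simp
    ring
  rw [this]
  ring

lemma gf_int {c t : ℝ} (ht : 0 < t) : Integrable (gf c t) := by
  have hb : 0 < 1 / (2 * t) := by positivity
  have h1 := (integrable_mul_exp_neg_mul_sq hb).add ((integrable_exp_neg_mul_sq hb).const_mul (t / 2))
  have h2 := (h1.comp_sub_right (t / 2)).const_mul (c * t ^ (-(3 : ℝ) / 2))
  convert h2 using 1
  ext σ
  rw [gf_eq ht]
  simp only [Pi.add_apply]
  ring

lemma wf_int {c t s : ℝ} (hc : 0 < c) (ht : 0 < t) (hs : 0 ≤ s) :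
    IntegrableOn (fun σ => wf c t (σ + s)) (Set.Ioi 0) ∧
    ∫ σ in Set.Ioi 0, wf c t (σ + s) ≤ c * Real.exp (-t / 8) * t ^ (-(3 : ℝ) / 2) * t := by
  set C := c * Real.exp (-t / 8) * t ^ (-(3 : ℝ) / 2) with hC
  have hC0 : 0 < C := by positivity
  have hd : ∀ x ∈ Set.Ici (0 : ℝ), HasDerivAt (fun σ => -(C * t) * Real.exp (-(σ + s) ^ 2 / (2 * t)))
      (wf c t (x + s)) x := by
    intro x hx
    have h1 : HasDerivAt (fun σ : ℝ => -(σ + s) ^ 2 / (2 * t)) (-(2 * (x + s)) / (2 * t)) x := by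
      have := ((((hasDerivAt_id x).add_const s).pow 2).neg).div_const (2 * t)
      simpa using this
    have := (h1.exp).const_mul (-(C * t))
    refine this.congr_deriv ?_
    unfold wf
    rw [← hC]
    field_simp
  have hp : ∀ x ∈ Set.Ioi (0 : ℝ), 0 ≤ wf c t (x + s) := fun x hx =>
    wf_nonneg hc ht (add_nonneg (le_of_lt hx) hs)
  have hl : Tendsto (fun σ => -(C * t) * Real.exp (-(σ + s) ^ 2 / (2 * t))) atTop (nhds 0) := by
    rw [show (0 : ℝ) = -(C * t) * 0 by ring]
    apply Tendsto.const_mul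
    apply Real.tendsto_exp_atBot.comp
    simp_rw [neg_div]
    apply tendsto_neg_atTop_atBot.comp
    apply Tendsto.atTop_div_const (by positivity)
    exact (tendsto_pow_atTop two_ne_zero).comp (tendsto_atTop_add_const_right _ _ tendsto_id)
  refine ⟨integrableOn_Ioi_deriv_of_nonneg' hd hp hl, ?_⟩
  rw [integral_Ioi_of_hasDerivAt_of_nonneg' hd hp hl]
  have : Real.exp (-(0 + s) ^ 2 / (2 * t)) ≤ 1 := by
    rw [Real.exp_le_one_iff, neg_div]
    simp only [Left.neg_nonpos_iff]
    positivity
  have : C * t * Real.exp (-(0 + s) ^ 2 / (2 * t)) ≤ C * t * 1 := by gcongr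
  linarith

noncomputable def Af (c t s : ℝ) (p : ℝ × ℝ) : ℝ := wf c t (p.1 + s) * kf s p.1 p.2

lemma Af_meas (c t s : ℝ) : Measurable (Af c t s) := by
  unfold Af kf wf Kf
  apply Measurable.mul
  · fun_prop
  · apply Measurable.ite (measurableSet_lt measurable_snd measurable_fst)
    · have h1 : Measurable fun p : ℝ × ℝ => Real.sinh (p.2 + s) := by fun_prop
      have h2 : Measurable fun p : ℝ × ℝ => Real.cosh (p.1 + s) - Real.cosh (p.2 + s) := by fun_prop
      exact h1.mul (h2.pow_const _)
    · exact measurable_const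

lemma ae_pos : ∀ᵐ x ∂(volume.restrict (Set.Ioi (0:ℝ))), 0 < x :=
  ae_restrict_mem measurableSet_Ioi

lemma Af_int {c t s : ℝ} (hc : 0 < c) (ht : 0 < t) (hs : 0 ≤ s) :
    Integrable (Af c t s)
      ((volume.restrict (Set.Ioi (0:ℝ))).prod (volume.restrict (Set.Ioi (0:ℝ)))) := by
  rw [integrable_prod_iff (Af_meas c t s).aestronglyMeasurable]
  constructor
  · filter_upwards [ae_pos] with σ hσ
    exact (kf_int hs hσ).1.const_mul (wf c t (σ + s))
  · have hg : Integrable (fun σ => √2 * gf c t (σ + s)) (volume.restrict (Set.Ioi (0:ℝ))) :=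
      (((gf_int ht).comp_add_right s).const_mul _).integrableOn
    apply hg.mono'
    · exact ((Af_meas c t s).norm.stronglyMeasurable.integral_prod_right').aestronglyMeasurable
    · filter_upwards [ae_pos] with σ hσ
      have hw : 0 ≤ wf c t (σ + s) := wf_nonneg hc ht (by linarith)
      have e : ∫ r in Set.Ioi (0:ℝ), ‖Af c t s (σ, r)‖ =
          wf c t (σ + s) * (2 * √(Real.cosh (σ + s) - Real.cosh s)) := by
        rw [← (kf_int hs hσ).2, ← integral_const_mul]
        apply setIntegral_congr_fun measurableSet_Ioi
        intro r hr
        simp only [Af]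
        rw [Real.norm_of_nonneg (mul_nonneg hw (kf_nonneg hs (le_of_lt hr)))]
      rw [e, Real.norm_of_nonneg (by positivity), gf]
      have := mul_le_mul_of_nonneg_left (kf_le hs hσ.le) hw
      linarith

lemma integral_Ioi_shift (f : ℝ → ℝ) (r s : ℝ) :
    ∫ σ in Set.Ioi r, f (σ + s) = ∫ σ in Set.Ioi (r + s), f σ := by
  rw [← integral_indicator measurableSet_Ioi, ← integral_indicator measurableSet_Ioi,
    ← integral_add_right_eq_self ((Set.Ioi (r + s)).indicator f) s]
  congr 1
  ext σ
  simp [Set.indicator_apply]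

lemma pdens_eq_s3 {c t s r : ℝ} (hr : 0 < r) :
    pdens c t (r + s) = ∫ σ in Set.Ioi (0:ℝ), Af c t s (σ, r) := by
  have h1 : (fun σ => Af c t s (σ, r)) = Set.indicator (Set.Ioi r)
      (fun σ => wf c t (σ + s) * Kf s σ r) := by
    ext σ
    simp [Af, kf, Set.indicator_apply]
  rw [h1, integral_indicator measurableSet_Ioi, Measure.restrict_restrict measurableSet_Ioi,
    Set.inter_eq_left.2 (Set.Ioi_subset_Ioi hr.le), pdens, ← integral_const_mul]
  have := integral_Ioi_shift (fun σ => c * Real.exp (-t / 8) * t ^ (-(3 : ℝ) / 2) * Real.sinh (r + s) *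
     (σ * Real.exp (-σ ^ 2 / (2 * t)) * (Real.cosh σ - Real.cosh (r + s)) ^ (-(1 : ℝ) / 2))) r s
  rw [← this]
  congr 1
  ext σ
  simp only [wf, Kf]
  ring
noncomputable def hf (s q z : ℝ) : ℝ :=
  |(1 / 2 + z / q) * Real.exp (-z ^ 2 / 2) -
    (1 / 2 + (z + s / q) / q) * Real.exp (-(z + s / q) ^ 2 / 2)|

lemma gauss_bound {s q z : ℝ} (hs : 0 ≤ s) (hs1 : s ≤ 1) (hq : 1 ≤ q) :
    hf s q z ≤ (3 / 2 + |z|) * ((1 + Real.exp 1) * Real.exp (-(1 / 4) * z ^ 2)) := by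
  have hq0 : 0 < q := by linarith
  set a := s / q with ha
  have ha0 : 0 ≤ a := by positivity
  have ha1 : a ≤ 1 := by rw [ha, div_le_one hq0]; linarith
  have hdiv : ∀ x : ℝ, |x / q| ≤ |x| := by
    intro x
    rw [abs_div, abs_of_pos hq0]
    exact div_le_self (abs_nonneg _) hq
  have h1 : |1 / 2 + z / q| ≤ 3 / 2 + |z| := by
    have := abs_add_le (1 / 2) (z / q)
    have h2 := hdiv z
    have h3 : |(1 / 2 : ℝ)| = 1 / 2 := by norm_num
    linarith
  have h2 : |1 / 2 + (z + a) / q| ≤ 3 / 2 + |z| := by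
    have := abs_add_le (1 / 2) ((z + a) / q)
    have h2 := hdiv (z + a)
    have h3 : |(1 / 2 : ℝ)| = 1 / 2 := by norm_num
    have h4 := abs_add_le z a
    rw [abs_of_nonneg ha0] at h4
    linarith
  have e1 : Real.exp (-z ^ 2 / 2) ≤ Real.exp (-(1 / 4) * z ^ 2) := by
    apply Real.exp_le_exp.2
    nlinarith [sq_nonneg z]
  have e2 : Real.exp (-(z + a) ^ 2 / 2) ≤ Real.exp 1 * Real.exp (-(1 / 4) * z ^ 2) := by
    rw [← Real.exp_add]
    apply Real.exp_le_exp.2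
    nlinarith [sq_nonneg (z + 2 * a)]
  unfold hf
  refine (abs_sub _ _).trans ?_
  rw [abs_mul, abs_mul, abs_of_pos (Real.exp_pos _), abs_of_pos (Real.exp_pos _)]
  have := mul_le_mul h1 e1 (Real.exp_pos _).le (by positivity)
  have := mul_le_mul h2 e2 (Real.exp_pos _).le (by positivity)
  linarith

lemma hf_tendsto {s : ℝ} (hs : 0 ≤ s) (hs1 : s ≤ 1) :
    Tendsto (fun q => ∫ z, hf s q z) atTop (nhds 0) := by
  rw [show (0 : ℝ) = ∫ z : ℝ, (0 : ℝ) by simp]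
  apply tendsto_integral_filter_of_dominated_convergence
    (fun z => (3 / 2 + |z|) * ((1 + Real.exp 1) * Real.exp (-(1 / 4) * z ^ 2)))
  · filter_upwards with q
    apply Measurable.aestronglyMeasurable
    unfold hf
    fun_prop
  · filter_upwards [eventually_ge_atTop 1] with q hq
    filter_upwards with z
    rw [Real.norm_of_nonneg (by unfold hf; positivity)]
    exact gauss_bound hs hs1 hq
  · have h1 := (integrable_mul_exp_neg_mul_sq (by norm_num : (0:ℝ) < 1 / 4)).norm.add
      ((integrable_exp_neg_mul_sq (by norm_num : (0:ℝ) < 1 / 4)).const_mul (3 / 2))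
    have h2 := h1.const_mul (1 + Real.exp 1)
    refine h2.congr (Eventually.of_forall fun z => ?_)
    simp only [Pi.add_apply, Real.norm_eq_abs, abs_mul, Real.abs_exp]
    ring
  · filter_upwards with z
    have t1 : ∀ x : ℝ, Tendsto (fun q : ℝ => x / q) atTop (nhds 0) := fun x =>
      tendsto_const_nhds.div_atTop tendsto_id
    have t2 : Tendsto (fun q : ℝ => z + s / q) atTop (nhds z) := by
      simpa using (t1 s).const_add z
    have t3 : Tendsto (fun q : ℝ => (z + s / q) / q) atTop (nhds 0) := t2.div_atTop tendsto_id
    have t4 : Tendsto (fun q : ℝ => Real.exp (-(z + s / q) ^ 2 / 2)) atTop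
        (nhds (Real.exp (-z ^ 2 / 2))) :=
      (Real.continuous_exp.tendsto _).comp (((t2.pow 2).neg).div_const 2)
    have t5 := ((((t1 z).const_add (1 / 2)).mul_const (Real.exp (-z ^ 2 / 2))).sub
      ((t3.const_add (1 / 2)).mul t4)).abs
    simpa [hf] using t5

lemma gf_diff {c t s : ℝ} (hc : 0 < c) (ht : 0 < t) :
    ∫ σ, |gf c t σ - gf c t (σ + s)| = c * ∫ z, hf s (√t) z := by
  set q := √t with hq
  have hq0 : 0 < q := Real.sqrt_pos.2 ht
  have htq : t = q ^ 2 := (Real.sq_sqrt ht.le).symm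
  have hpow : t ^ (-(3 : ℝ) / 2) = (q ^ 3)⁻¹ := by
    rw [hq, Real.sqrt_eq_rpow, ← Real.rpow_natCast, ← Real.rpow_mul ht.le, ← Real.rpow_neg ht.le]
    norm_num
  have e1 : ∀ z, c * hf s q z = q * |gf c t (q * z + t / 2) - gf c t (q * z + t / 2 + s)| := by
    intro z
    rw [gf_eq ht, gf_eq ht, hpow, hf, ← abs_of_pos hc, ← abs_mul, ← abs_of_pos hq0, ← abs_mul,
      abs_of_pos hc, abs_of_pos hq0]
    congr 1
    have x1 : -(1 / (2 * t)) * (q * z + t / 2 - t / 2) ^ 2 = -z ^ 2 / 2 := by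
      rw [htq]; field_simp; ring
    have x2 : -(1 / (2 * t)) * (q * z + t / 2 + s - t / 2) ^ 2 = -(z + s / q) ^ 2 / 2 := by
      rw [htq]; field_simp; ring
    rw [x1, x2, htq]
    field_simp
    ring
  rw [← integral_const_mul]
  simp_rw [e1]
  rw [integral_const_mul,
    Measure.integral_comp_mul_left (fun y => |gf c t (y + t / 2) - gf c t (y + t / 2 + s)|) q,
    integral_add_right_eq_self (fun y => |gf c t y - gf c t (y + s)|) (t / 2),
    abs_of_pos (inv_pos.2 hq0), smul_eq_mul, ← mul_assoc, mul_inv_cancel₀ hq0.ne', one_mul]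

lemma pdens_u {c t s : ℝ} (hc : 0 < c) (ht : 0 < t) (hs : 0 ≤ s) {u : ℝ → ℝ} {M : ℝ}
    (hu : ContinuousOn u (Set.Ici (0 : ℝ))) (hM : ∀ r ∈ Set.Ici (0 : ℝ), |u r| ≤ M) :
    Integrable (fun p => Af c t s p * u p.2)
      ((volume.restrict (Set.Ioi (0:ℝ))).prod (volume.restrict (Set.Ioi (0:ℝ)))) ∧
    ∫ r in Set.Ioi (0:ℝ), pdens c t (r + s) * u r = ∫ p, Af c t s p * u p.2
      ∂((volume.restrict (Set.Ioi (0:ℝ))).prod (volume.restrict (Set.Ioi (0:ℝ)))) := by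
  have hi : Integrable (fun p => Af c t s p * u p.2)
      ((volume.restrict (Set.Ioi (0:ℝ))).prod (volume.restrict (Set.Ioi (0:ℝ)))) := by
    apply (Af_int hc ht hs).mul_bdd (c := M)
    · exact ((hu.mono Set.Ioi_subset_Ici_self).aestronglyMeasurable measurableSet_Ioi).comp_snd
    · have := Measure.quasiMeasurePreserving_snd (μ := volume.restrict (Set.Ioi (0:ℝ)))
        (ν := volume.restrict (Set.Ioi (0:ℝ)))
      filter_upwards [this.ae ae_pos] with p hp
      exact hM _ (le_of_lt hp)
  refine ⟨hi, ?_⟩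
  rw [integral_prod_symm _ hi]
  apply setIntegral_congr_fun measurableSet_Ioi
  intro r hr
  simp only
  rw [integral_mul_const, pdens_eq_s3 hr]

lemma inner_bound {c t s σ : ℝ} (hc : 0 < c) (ht : 0 < t) (hs : 0 ≤ s) (hs1 : s ≤ 1) (hσ : 0 < σ) :
    ∫ r in Set.Ioi (0:ℝ), |Af c t 0 (σ, r) - Af c t s (σ, r)| ≤
      √2 * |gf c t σ - gf c t (σ + s)| + √2 * Real.exp (1 / 2) * wf c t (σ + s) := by
  obtain ⟨i0, v0⟩ := kf_int le_rfl hσ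
  obtain ⟨is, vs⟩ := kf_int hs hσ
  have hw : 0 ≤ wf c t (σ + s) := wf_nonneg hc ht (by linarith)
  set W := |wf c t σ - Real.exp (s / 2) * wf c t (σ + s)| with hW
  have b0 := i0.const_mul W
  have b1 : Integrable (fun r => wf c t (σ + s) * (kf s σ r - Real.exp (s / 2) * kf 0 σ r))
      (volume.restrict (Set.Ioi 0)) := (is.sub (i0.const_mul (Real.exp (s / 2)))).const_mul (wf c t (σ + s))
  calc _ ≤ ∫ r in Set.Ioi (0:ℝ), (W * kf 0 σ r +
        wf c t (σ + s) * (kf s σ r - Real.exp (s / 2) * kf 0 σ r)) := by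
        apply setIntegral_mono_on
        · exact ((i0.const_mul (wf c t (σ + 0))).sub (is.const_mul (wf c t (σ + s)))).abs
        · exact b0.add b1
        · exact measurableSet_Ioi
        · intro r hr
          have k0 : 0 ≤ kf 0 σ r := kf_nonneg le_rfl (le_of_lt hr)
          have km : Real.exp (s / 2) * kf 0 σ r ≤ kf s σ r := kf_mono hs (le_of_lt hr)
          simp only [Af, add_zero]
          have e : wf c t σ * kf 0 σ r - wf c t (σ + s) * kf s σ r =
            (wf c t σ - Real.exp (s / 2) * wf c t (σ + s)) * kf 0 σ r -
              wf c t (σ + s) * (kf s σ r - Real.exp (s / 2) * kf 0 σ r) := by ring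
          rw [e]
          refine (abs_sub _ _).trans ?_
          rw [abs_mul, abs_of_nonneg k0,
            abs_of_nonneg (mul_nonneg hw (sub_nonneg.2 km))]
    _ = W * (2 * √(Real.cosh (σ + 0) - Real.cosh 0)) + wf c t (σ + s) *
        (2 * √(Real.cosh (σ + s) - Real.cosh s) -
          Real.exp (s / 2) * (2 * √(Real.cosh (σ + 0) - Real.cosh 0))) := by
        rw [← v0, ← vs, integral_add b0 b1, integral_const_mul, integral_const_mul,
          integral_sub is (i0.const_mul _), integral_const_mul]
    _ ≤ W * (√2 * Real.exp ((σ + 0) / 2)) + wf c t (σ + s) * (√2 * Real.exp (1 / 2)) :=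
        add_le_add (mul_le_mul_of_nonneg_left (kf_le le_rfl hσ.le) (abs_nonneg _))
          (mul_le_mul_of_nonneg_left (E_le hs hs1 hσ.le) hw)
    _ = _ := by
        have : |gf c t σ - gf c t (σ + s)| = W * Real.exp (σ / 2) := by
          rw [hW, ← Real.abs_exp (σ / 2), ← abs_mul]
          congr 1
          simp only [gf]
          have : Real.exp ((σ + s) / 2) = Real.exp (s / 2) * Real.exp (σ / 2) := by
            rw [← Real.exp_add]; ring_nf
          rw [this]
          ring
        rw [this, add_zero]
        ring

lemma main_bound {c t s : ℝ} (hc : 0 < c) (ht : 0 < t) (hs : 0 ≤ s) (hs1 : s ≤ 1)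
    {u : ℝ → ℝ} {M : ℝ}
    (hu : ContinuousOn u (Set.Ici (0 : ℝ))) (hM : ∀ r ∈ Set.Ici (0 : ℝ), |u r| ≤ M) :
    |(∫ r in Set.Ioi (0 : ℝ), pdens c t r * u r) -
          ∫ r in Set.Ioi (0 : ℝ), pdens c t (r + s) * u r| ≤
      M * (√2 * (c * ∫ z, hf s (√t) z) +
        √2 * Real.exp (1 / 2) * (c * Real.exp (-t / 8) * t ^ (-(3 : ℝ) / 2) * t)) := by
  have hM0 : 0 ≤ M := (abs_nonneg _).trans (hM 0 Set.self_mem_Ici)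
  obtain ⟨i0, v0⟩ := pdens_u hc ht le_rfl hu hM
  obtain ⟨is, vs⟩ := pdens_u hc ht hs hu hM
  simp only [add_zero] at v0
  have iA : Integrable (fun p => |Af c t 0 p - Af c t s p|)
      ((volume.restrict (Set.Ioi (0:ℝ))).prod (volume.restrict (Set.Ioi (0:ℝ)))) :=
    ((Af_int hc ht le_rfl).sub (Af_int hc ht hs)).abs
  have ig : Integrable (fun σ => |gf c t σ - gf c t (σ + s)|) :=
    ((gf_int ht).sub ((gf_int ht).comp_add_right s)).abs
  obtain ⟨iw, vw⟩ := wf_int hc ht hs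
  rw [v0, vs, ← integral_sub i0 is]
  calc _ ≤ ∫ p, |Af c t 0 p * u p.2 - Af c t s p * u p.2|
      ∂((volume.restrict (Set.Ioi (0:ℝ))).prod (volume.restrict (Set.Ioi (0:ℝ)))) :=
        abs_integral_le_integral_abs
    _ ≤ ∫ p, M * |Af c t 0 p - Af c t s p|
      ∂((volume.restrict (Set.Ioi (0:ℝ))).prod (volume.restrict (Set.Ioi (0:ℝ)))) := by
        apply integral_mono_ae (i0.sub is).abs (iA.const_mul M)
        have := Measure.quasiMeasurePreserving_snd (μ := volume.restrict (Set.Ioi (0:ℝ)))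
          (ν := volume.restrict (Set.Ioi (0:ℝ)))
        filter_upwards [this.ae ae_pos] with p hp
        change |Af c t 0 p * u p.2 - Af c t s p * u p.2| ≤ M * |Af c t 0 p - Af c t s p|
        rw [← sub_mul, abs_mul, mul_comm]
        exact mul_le_mul_of_nonneg_right (hM _ (le_of_lt hp)) (abs_nonneg _)
    _ = M * ∫ σ in Set.Ioi (0:ℝ), ∫ r in Set.Ioi (0:ℝ), |Af c t 0 (σ, r) - Af c t s (σ, r)| := by
        rw [integral_const_mul, integral_prod _ iA]
    _ ≤ M * ∫ σ in Set.Ioi (0:ℝ), (√2 * |gf c t σ - gf c t (σ + s)| +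
          √2 * Real.exp (1 / 2) * wf c t (σ + s)) := by
        apply mul_le_mul_of_nonneg_left _ hM0
        apply setIntegral_mono_on iA.integral_prod_left
          ((ig.const_mul _).integrableOn.add (iw.const_mul _)) measurableSet_Ioi
        intro σ hσ
        exact inner_bound hc ht hs hs1 hσ
    _ ≤ _ := by
        apply mul_le_mul_of_nonneg_left _ hM0
        rw [integral_add (ig.const_mul _).integrableOn (iw.const_mul _), integral_const_mul,
          integral_const_mul, ← gf_diff hc ht]
        apply add_le_add
        · apply mul_le_mul_of_nonneg_left _ (by positivity)
          exact setIntegral_le_integral ig (Eventually.of_forall fun _ => abs_nonneg _)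
        · exact mul_le_mul_of_nonneg_left vw (by positivity)

theorem integrals_against_translated_kernel (u : ℝ → ℝ)
    (hu_cont : ContinuousOn u (Set.Ici (0 : ℝ)))
    (hu_bdd : ∃ M : ℝ, ∀ r ∈ Set.Ici (0 : ℝ), |u r| ≤ M)
    (s c : ℝ) (hs : s ∈ Set.Icc (0 : ℝ) 1) (hc : 0 < c) :
    Tendsto
      (fun t : ℝ =>
        (∫ r in Set.Ioi (0 : ℝ), pdens c t r * u r) -
          ∫ r in Set.Ioi (0 : ℝ), pdens c t (r + s) * u r)
      atTop (nhds 0) := by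
  obtain ⟨M, hM⟩ := hu_bdd
  have hlim1 : Tendsto (fun t => ∫ z, hf s (√t) z) atTop (nhds 0) :=
    (hf_tendsto hs.1 hs.2).comp Real.tendsto_sqrt_atTop
  have hlim2 : Tendsto (fun t : ℝ => c * Real.exp (-t / 8) * t ^ (-(3 : ℝ) / 2) * t) atTop
      (nhds 0) := by
    have h1 : Tendsto (fun t : ℝ => Real.exp (-t / 8)) atTop (nhds 0) := by
      apply Real.tendsto_exp_atBot.comp
      simp_rw [neg_div]
      exact tendsto_neg_atTop_atBot.comp (tendsto_id.atTop_div_const (by norm_num))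
    have h2 : Tendsto (fun t : ℝ => t ^ (-(1 / 2 : ℝ))) atTop (nhds 0) :=
      tendsto_rpow_neg_atTop (by norm_num)
    have h3 := (h1.const_mul c).mul h2
    rw [mul_zero] at h3
    refine h3.congr' ?_
    filter_upwards [eventually_gt_atTop 0] with t ht
    rw [mul_assoc _ (t ^ (-(3 : ℝ) / 2)) t, ← Real.rpow_add_one ht.ne']
    norm_num
  have hlim := (((hlim1.const_mul c).const_mul (√2)).add
    (hlim2.const_mul (√2 * Real.exp (1 / 2)))).const_mul M
  simp only [mul_zero, add_zero] at hlim
  apply squeeze_zero_norm' _ hlim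
  filter_upwards [eventually_gt_atTop 0] with t ht
  rw [Real.norm_eq_abs]
  exact main_bound hc ht hs.1 hs.2 hu_cont hM
end

section
/- Let R > 0, t > 0, and let f : [0,t] → ℝ be a continuous function with f(0) ≥ R and f(r) ≥ R/2 for all r ∈ [0,t]. Then (1 − e^{−R})^{1/2} ≤ ( (1 − e^{−2 f(t)}) / (1 − e^{−2 f(0)}) )^{1/2} · exp( (1/8) ∫_0^t ( coth²(f(r)) − 1 ) dr ) ≤ exp( t / (8·sinh²(R/2)) ) · (1 − e^{−2R})^{−1/2}, where coth(x) = cosh(x)/sinh(x). -/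
open MeasureTheory Real

theorem girsanov_density_ratio_bounds (R t : ℝ) (hR : 0 < R) (ht : 0 < t)
    (f : ℝ → ℝ) (hf_cont : ContinuousOn f (Set.Icc 0 t))
    (hf0 : R ≤ f 0) (hf : ∀ r ∈ Set.Icc (0 : ℝ) t, R / 2 ≤ f r) :
    Real.sqrt (1 - Real.exp (-R)) ≤
        Real.sqrt ((1 - Real.exp (-2 * f t)) / (1 - Real.exp (-2 * f 0))) *
          Real.exp ((1 / 8) *
            ∫ r in (0 : ℝ)..t, (Real.cosh (f r) / Real.sinh (f r)) ^ 2 - 1) ∧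
      Real.sqrt ((1 - Real.exp (-2 * f t)) / (1 - Real.exp (-2 * f 0))) *
          Real.exp ((1 / 8) *
            ∫ r in (0 : ℝ)..t, (Real.cosh (f r) / Real.sinh (f r)) ^ 2 - 1) ≤
        Real.exp (t / (8 * Real.sinh (R / 2) ^ 2)) * (Real.sqrt (1 - Real.exp (-2 * R)))⁻¹ := by
  have hpt : ∀ r ∈ Set.Icc (0 : ℝ) t,
      (Real.cosh (f r) / Real.sinh (f r)) ^ 2 - 1 = 1 / Real.sinh (f r) ^ 2 := by
    intro r hr
    have h1 : 0 < Real.sinh (f r) := Real.sinh_pos_iff.mpr (by linarith [hf r hr])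
    rw [div_pow, Real.cosh_sq]
    field_simp
    ring
  have hs : 0 < Real.sinh (R / 2) := Real.sinh_pos_iff.mpr (by linarith)
  have hI0 : 0 ≤ ∫ r in (0 : ℝ)..t, ((Real.cosh (f r) / Real.sinh (f r)) ^ 2 - 1) := by
    apply intervalIntegral.integral_nonneg ht.le
    intro r hr
    rw [hpt r hr]
    positivity
  have hI1 : (∫ r in (0 : ℝ)..t, ((Real.cosh (f r) / Real.sinh (f r)) ^ 2 - 1))
      ≤ t / Real.sinh (R / 2) ^ 2 := by
    have hc : ContinuousOn (fun r => (Real.cosh (f r) / Real.sinh (f r)) ^ 2 - 1)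
        (Set.Icc 0 t) := by
      refine ContinuousOn.sub (ContinuousOn.pow (ContinuousOn.div
        (Real.continuous_cosh.comp_continuousOn hf_cont)
        (Real.continuous_sinh.comp_continuousOn hf_cont) ?_) 2) continuousOn_const
      intro r hr
      exact (Real.sinh_pos_iff.mpr (by linarith [hf r hr])).ne'
    have h := intervalIntegral.integral_mono_on (μ := volume) ht.le
      (hc.intervalIntegrable_of_Icc ht.le)
      (intervalIntegrable_const (c := 1 / Real.sinh (R / 2) ^ 2)) (by
        intro r hr
        rw [hpt r hr]
        have := Real.sinh_le_sinh.mpr (hf r hr)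
        gcongr)
    rw [intervalIntegral.integral_const] at h
    refine h.trans (le_of_eq ?_)
    simp [div_eq_mul_inv]
  set I := ∫ r in (0 : ℝ)..t, ((Real.cosh (f r) / Real.sinh (f r)) ^ 2 - 1) with hI
  have hft := hf t ⟨ht.le, le_rfl⟩
  have a1 : Real.exp (-2 * f t) ≤ Real.exp (-R) := Real.exp_le_exp.mpr (by linarith)
  have a2 : Real.exp (-2 * f 0) ≤ Real.exp (-2 * R) := Real.exp_le_exp.mpr (by linarith)
  have a3 : Real.exp (-R) < 1 := Real.exp_lt_one_iff.mpr (by linarith)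
  have a4 : Real.exp (-2 * R) < 1 := Real.exp_lt_one_iff.mpr (by linarith)
  have p1 := Real.exp_pos (-2 * f 0)
  have p2 := Real.exp_pos (-2 * f t)
  constructor
  · have h1 : Real.sqrt (1 - Real.exp (-R)) ≤
        Real.sqrt ((1 - Real.exp (-2 * f t)) / (1 - Real.exp (-2 * f 0))) := by
      apply Real.sqrt_le_sqrt
      rw [le_div_iff₀ (by linarith)]
      nlinarith
    exact h1.trans (le_mul_of_one_le_right (Real.sqrt_nonneg _)
      (Real.one_le_exp (by positivity)))
  · rw [mul_comm, ← Real.sqrt_inv]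
    have h2 : (1 - Real.exp (-2 * f t)) / (1 - Real.exp (-2 * f 0)) ≤
        (1 - Real.exp (-2 * R))⁻¹ := by
      rw [← one_div]
      apply div_le_div₀ <;> linarith
    have h3 : 1 / 8 * I ≤ t / (8 * Real.sinh (R / 2) ^ 2) := by
      calc 1 / 8 * I ≤ 1 / 8 * (t / Real.sinh (R / 2) ^ 2) := by gcongr
        _ = _ := by field_simp
    gcongr
end
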